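/- Let (D, F) be a good pair, X ⊆ ℝⁿ a convex compact set, A : ℝⁿ → ℝᵐ an affine map with A(X) ⊆ M, and g ∈ ℝⁿ. Then for every ε with 0 ≤ ε < 1/4 one has RiskA(ε) ≤ θ(ε) · Risk_*(ε), where θ(ε) = 2·ln(2/ε)/ln(1/(4ε)); that is, the minimax optimal ε-risk achievable with affine estimates is within the factor θ(ε) of the minimax optimal ε-risk over all Borel estimates. -/

import Mathlib

open MeasureTheory Real Matrix Set
open scoped ENNReal

/-- A "good pair" `(𝒟, ℱ)` in the sense of Juditsky–Nemirovski:
a parametric family of positive probability densities `p μ`, `μ ∈ M`, on `(Ω, P)`,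
together with a finite-dimensional linear space `F` of Borel functions on `Ω`
containing the constants, such that log-likelihood ratios belong to `F` and
`μ ↦ ln ∫ e^{φ} p_μ dP` is well defined (finite, witnessed by integrability)
and concave on `M` for every `φ ∈ F`. -/
structure GoodPair (Ω : Type*) [MeasurableSpace Ω] (P : Measure Ω)
    (E : Type*) [NormedAddCommGroup E] [NormedSpace ℝ E] where
  M : Set E
  p : E → Ω → ℝ
  F : Submodule ℝ (Ω → ℝ)
  M_open : IsOpen M
  M_convex : Convex ℝ M
  p_meas : ∀ μ ∈ M, Measurable (p μ)
  p_pos : ∀ μ ∈ M, ∀ ω, 0 < p μ ω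
  p_prob : ∀ μ ∈ M, ∫ ω, p μ ω ∂P = 1
  F_fd : FiniteDimensional ℝ F
  F_meas : ∀ φ ∈ F, Measurable φ
  F_const : ∀ c : ℝ, (fun _ : Ω => c) ∈ F
  logratio_mem : ∀ μ ∈ M, ∀ ν ∈ M, (fun ω => Real.log (p μ ω / p ν ω)) ∈ F
  F_finite : ∀ φ ∈ F, ∀ μ ∈ M, Integrable (fun ω => Real.exp (φ ω) * p μ ω) P
  F_concave : ∀ φ ∈ F,
    ConcaveOn ℝ M (fun μ => Real.log (∫ ω, Real.exp (φ ω) * p μ ω ∂P))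

variable {Ω : Type*} [MeasurableSpace Ω] {P : Measure Ω}
  {E : Type*} [NormedAddCommGroup E] [NormedSpace ℝ E] {n : ℕ}

/-- The distribution of the observation when the parameter is `μ`:
the measure with density `p μ` with respect to `P`. -/
noncomputable def obsMeasure (D : GoodPair Ω P E) (μ : E) : Measure Ω :=
  P.withDensity fun ω => ENNReal.ofReal (D.p μ ω)

/-- The `ε`-risk of an estimate `ghat` of the linear form `gᵀx`, `x ∈ X`:
`inf {δ | sup_{x ∈ X} Prob_{ω ∼ p_{A(x)}·P} {|ghat ω - gᵀx| > δ} < ε}`. -/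
noncomputable def Risk (D : GoodPair Ω P E) (A : (Fin n → ℝ) →ᵃ[ℝ] E)
    (g : Fin n → ℝ) (X : Set (Fin n → ℝ)) (ghat : Ω → ℝ) (ε : ℝ) : ℝ :=
  sInf {δ : ℝ |
    (⨆ x ∈ X, obsMeasure D (A x) {ω | δ < |ghat ω - g ⬝ᵥ x|}) < ENNReal.ofReal ε}

/-- The minimax optimal `ε`-risk over all (Borel) estimates. -/
noncomputable def RiskStar (D : GoodPair Ω P E) (A : (Fin n → ℝ) →ᵃ[ℝ] E)
    (g : Fin n → ℝ) (X : Set (Fin n → ℝ)) (ε : ℝ) : ℝ :=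
  sInf {ρ : ℝ | ∃ ghat : Ω → ℝ, Measurable ghat ∧ ρ = Risk D A g X ghat ε}

/-- The minimax optimal `ε`-risk over affine estimates, i.e. estimates `φ ∈ F`. -/
noncomputable def RiskAff (D : GoodPair Ω P E) (A : (Fin n → ℝ) →ᵃ[ℝ] E)
    (g : Fin n → ℝ) (X : Set (Fin n → ℝ)) (ε : ℝ) : ℝ :=
  sInf {ρ : ℝ | ∃ φ ∈ D.F, ρ = Risk D A g X φ ε}

/-- The function `Φ_r(x, y; φ, α)`. -/
noncomputable def PhiFun (D : GoodPair Ω P E) (A : (Fin n → ℝ) →ᵃ[ℝ] E)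
    (g : Fin n → ℝ) (r : ℝ) (x y : Fin n → ℝ) (φ : Ω → ℝ) (α : ℝ) : ℝ :=
  g ⬝ᵥ x - g ⬝ᵥ y
    + α * Real.log (∫ ω, Real.exp (φ ω / α) * D.p (A y) ω ∂P)
    + α * Real.log (∫ ω, Real.exp (-φ ω / α) * D.p (A x) ω ∂P)
    + 2 * α * r

/-- `Φ_*(r)` defined through the sup-inf value:
`2Φ_*(r) = sup_{x,y ∈ X} inf_{φ ∈ F, α > 0} Φ_r(x, y; φ, α)`. -/
noncomputable def PhiStarSI (D : GoodPair Ω P E) (A : (Fin n → ℝ) →ᵃ[ℝ] E)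
    (g : Fin n → ℝ) (X : Set (Fin n → ℝ)) (r : ℝ) : ℝ :=
  (1/2) * sSup {v : ℝ | ∃ x ∈ X, ∃ y ∈ X,
    v = sInf {w : ℝ | ∃ φ ∈ D.F, ∃ α : ℝ, 0 < α ∧ w = PhiFun D A g r x y φ α}}

/-- `Φ_*(r)` defined through the inf-sup value:
`2Φ_*(r) = inf_{φ ∈ F, α > 0} sup_{x,y ∈ X} Φ_r(x, y; φ, α)`. -/
noncomputable def PhiStarIS (D : GoodPair Ω P E) (A : (Fin n → ℝ) →ᵃ[ℝ] E)
    (g : Fin n → ℝ) (X : Set (Fin n → ℝ)) (r : ℝ) : ℝ :=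
  (1/2) * sInf {v : ℝ | ∃ φ ∈ D.F, ∃ α : ℝ, 0 < α ∧
    v = sSup {w : ℝ | ∃ x ∈ X, ∃ y ∈ X, w = PhiFun D A g r x y φ α}}

/-- A minimax theorem for a function that is concave and continuous on a compact set in the first
argument and convex in the second one. -/
theorem exists_forall_le_of_concaveOn_convexOn {V W : Type*} [AddCommGroup V] [Module ℝ V]
    [TopologicalSpace V] [AddCommGroup W] [Module ℝ W] {K : Set V} {Y : Set W} {f : V → W → ℝ}
    {c : ℝ} (hK : IsCompact K) (hKne : K.Nonempty)
    (hconc : ∀ y ∈ Y, ConcaveOn ℝ K fun x => f x y)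
    (hcont : ∀ y ∈ Y, ContinuousOn (fun x => f x y) K)
    (hconv : ∀ x ∈ K, ConvexOn ℝ Y (f x)) (h : ∀ x ∈ K, ∃ y ∈ Y, f x y < c) :
    ∃ y ∈ Y, ∀ x ∈ K, f x y ≤ c := by
  classical
  choose! η hηY hηc using h
  obtain ⟨t, htK, hcover⟩ := hK.elim_nhdsWithin_subcover (fun x => {z | f z (η x) < c})
    fun x hx => (hcont _ (hηY x hx) x hx).eventually_lt_const (hηc x hx)
  have hKcv : Convex ℝ K := by
    obtain ⟨x₀, hx₀⟩ := hKne
    exact (hconc _ (hηY x₀ hx₀)).1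
  let S : Set (t → ℝ) := {w | ∀ i, 0 < w i}
  let T : Set (t → ℝ) := {w | ∃ x ∈ K, ∀ i : t, w i ≤ f x (η i) - c}
  have hSopen : IsOpen S := by
    have : S = Set.pi univ fun _ => Ioi 0 := by ext; simp [S]
    rw [this]
    exact isOpen_set_pi finite_univ fun _ _ => isOpen_Ioi
  have hScv : Convex ℝ S := by
    have : S = Set.pi univ fun _ => Ioi 0 := by ext; simp [S]
    rw [this]
    exact convex_pi fun _ _ => convex_Ioi 0
  have hTcv : Convex ℝ T := by
    rintro v ⟨x, hx, hv⟩ w ⟨z, hz, hw⟩ a b ha hb hab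
    refine ⟨a • x + b • z, hKcv hx hz ha hb hab, fun i => ?_⟩
    have h₁ := (hconc _ (hηY i (htK i i.2))).2 hx hz ha hb hab
    have h₂ := mul_le_mul_of_nonneg_left (hv i) ha
    have h₃ := mul_le_mul_of_nonneg_left (hw i) hb
    simp only [smul_eq_mul, Pi.add_apply, Pi.smul_apply] at h₁ ⊢
    have : c = a * c + b * c := by rw [← add_mul, hab, one_mul]
    linarith
  have hdisj : Disjoint S T := by
    rw [Set.disjoint_left]
    rintro w hwS ⟨x, hx, hw⟩
    obtain ⟨i, hi, hxi⟩ := mem_iUnion₂.1 (hcover hx)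
    have h₁ := hwS ⟨i, hi⟩
    have h₂ := hw ⟨i, hi⟩
    simp only [mem_ofPred_eq] at hxi
    linarith
  obtain ⟨l, u, hlS, hlT⟩ := geometric_hahn_banach_open hScv hSopen hTcv hdisj
  have hone : l 1 < u := hlS 1 fun _ => one_pos
  have hu : 0 ≤ u := by
    by_contra! hu
    have h₁ := hlS ((u / l 1) • (1 : t → ℝ)) fun i => by
      simpa using div_pos_of_neg_of_neg hu (hone.trans hu)
    rw [map_smul, smul_eq_mul, div_mul_cancel₀ _ (hone.trans hu).ne] at h₁
    exact lt_irrefl _ h₁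
  have hl : ∀ w, l w = ∑ i, w i * l (Pi.single i 1) := by
    intro w
    conv_lhs => rw [← Finset.univ_sum_single w]
    rw [map_sum]
    refine Finset.sum_congr rfl fun i _ => ?_
    rw [← smul_eq_mul, ← map_smul, ← Pi.single_smul, smul_eq_mul, mul_one]
  obtain ⟨x₀, hx₀⟩ := hKne
  have hmemT : ∀ x ∈ K, (fun i : t => f x (η i) - c) ∈ T := fun x hx => ⟨x, hx, fun _ => le_rfl⟩
  have hneg : ∀ i, l (Pi.single i 1) ≤ 0 := by
    intro i
    by_contra! hi
    have hb := hlT _ (hmemT x₀ hx₀)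
    set b : t → ℝ := fun i => f x₀ (η i) - c with hbdef
    set s : ℝ := (l b - u + 1) / l (Pi.single i 1)
    have hs : 0 ≤ s := div_nonneg (by linarith) hi.le
    have h₁ := hlT (b - s • Pi.single i 1) ⟨x₀, hx₀, fun j => by
      have : 0 ≤ s * (Pi.single i 1 : t → ℝ) j :=
        mul_nonneg hs (by by_cases hij : j = i <;> simp [hij])
      simp only [hbdef, Pi.sub_apply, Pi.smul_apply, smul_eq_mul]
      linarith⟩
    rw [map_sub, map_smul, smul_eq_mul, div_mul_cancel₀ _ hi.ne'] at h₁
    linarith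
  set wt : t → ℝ := fun i => -l (Pi.single i 1) with hwt
  have hwt0 : ∀ i, 0 ≤ wt i := fun i => neg_nonneg.2 (hneg i)
  have hpos : 0 < ∑ i, wt i := by
    refine (Finset.sum_nonneg fun i _ => hwt0 i).lt_of_ne fun h0 => ?_
    have hz := (Finset.sum_eq_zero_iff_of_nonneg fun i _ => hwt0 i).1 h0.symm
    have hl0 : ∀ w, l w = 0 := fun w => by
      rw [hl]
      exact Finset.sum_eq_zero fun i hi => by
        have := hz i hi
        simp only [hwt, neg_eq_zero] at this
        simp [this]
    have := hlT _ (hmemT x₀ hx₀)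
    rw [hl0] at this hone
    linarith
  have hmem : ∀ i ∈ (Finset.univ : Finset t), η i ∈ Y := fun i _ => hηY i (htK i i.2)
  have hnn : ∀ i ∈ (Finset.univ : Finset t), 0 ≤ wt i / ∑ j, wt j :=
    fun i _ => div_nonneg (hwt0 i) hpos.le
  have hsum : ∑ i, wt i / ∑ j, wt j = 1 := by rw [← Finset.sum_div, div_self hpos.ne']
  refine ⟨∑ i, (wt i / ∑ j, wt j) • η i, (hconv x₀ hx₀).1.sum_mem hnn hsum hmem, fun x hx => ?_⟩
  refine ((hconv x hx).map_sum_le hnn hsum hmem).trans ?_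
  have h₁ := hlT _ (hmemT x hx)
  rw [hl] at h₁
  have h₂ : ∑ i : t, (f x (η i) - c) * l (Pi.single i 1)
      = c * (∑ i, wt i) - ∑ i, wt i * f x (η i) := by
    rw [Finset.mul_sum, ← Finset.sum_sub_distrib]
    exact Finset.sum_congr rfl fun i _ => by simp only [hwt]; ring
  have h₃ : ∑ i, (wt i / ∑ j, wt j) • f x (η i) = (∑ i, wt i * f x (η i)) / ∑ j, wt j := by
    rw [Finset.sum_div]
    exact Finset.sum_congr rfl fun i _ => by rw [smul_eq_mul]; ring
  rw [h₃, div_le_iff₀ hpos]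
  linarith

/-- The **Cauchy–Schwarz inequality** for the integral of the geometric mean. -/
theorem integral_sqrt_mul_le {μ : Measure Ω} {f h : Ω → ℝ} (hf : Integrable f μ)
    (hh : Integrable h μ) (hf0 : ∀ ω, 0 ≤ f ω) (hh0 : ∀ ω, 0 ≤ h ω) :
    Integrable (fun ω => √(f ω * h ω)) μ ∧
      ∫ ω, √(f ω * h ω) ∂μ ≤ √(∫ ω, f ω ∂μ) * √(∫ ω, h ω ∂μ) := by
  have hI : Integrable (fun ω => √(f ω * h ω)) μ := by
    refine (hf.add hh).mono' ?_ (.of_forall fun ω => ?_)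
    · exact continuous_sqrt.comp_aestronglyMeasurable
        (hf.aestronglyMeasurable.mul hh.aestronglyMeasurable)
    · rw [norm_of_nonneg (sqrt_nonneg _)]
      refine sqrt_le_iff.2 ⟨add_nonneg (hf0 ω) (hh0 ω), ?_⟩
      simp only [Pi.add_apply]
      nlinarith [hf0 ω, hh0 ω, mul_nonneg (hf0 ω) (hh0 ω)]
  refine ⟨hI, ?_⟩
  have hd : discrim (∫ ω, f ω ∂μ) (-2 * ∫ ω, √(f ω * h ω) ∂μ) (∫ ω, h ω ∂μ) ≤ 0 := by
    refine discrim_le_zero fun s => ?_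
    have : (∫ ω, f ω ∂μ) * (s * s) + (-2 * ∫ ω, √(f ω * h ω) ∂μ) * s + ∫ ω, h ω ∂μ
        = ∫ ω, (√(f ω) * s - √(h ω)) ^ 2 ∂μ := by
      have he : ∀ ω, (√(f ω) * s - √(h ω)) ^ 2
          = f ω * (s * s) + (-2 * s) * √(f ω * h ω) + h ω := fun ω => by
        rw [sqrt_mul (hf0 ω)]
        nlinarith [sq_sqrt (hf0 ω), sq_sqrt (hh0 ω)]
      simp_rw [he]
      have hsum : Integrable (fun ω => f ω * (s * s) + (-2 * s) * √(f ω * h ω)) μ :=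
        (hf.mul_const _).add (hI.const_mul _)
      rw [integral_add hsum hh, integral_add (hf.mul_const _) (hI.const_mul _),
        integral_mul_const, integral_const_mul]
      ring
    rw [this]
    exact integral_nonneg fun ω => sq_nonneg _
  rw [← sqrt_mul (integral_nonneg hf0)]
  refine le_sqrt_of_sq_le ?_
  rw [discrim] at hd
  linarith

namespace GoodPair

variable (D : GoodPair Ω P E) {φ ψ : Ω → ℝ} {μ ν : E}

/-- The logarithm of the moment generating functional, `ln ∫ e^φ p_μ dP`. -/
noncomputable def logMgf (φ : Ω → ℝ) (μ : E) : ℝ :=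
  log (∫ ω, exp (φ ω) * D.p μ ω ∂P)

/-- The Hellinger affinity `∫ √(p_μ p_ν) dP`. -/
noncomputable def affinity (μ ν : E) : ℝ :=
  ∫ ω, √(D.p μ ω * D.p ν ω) ∂P

variable {D}

theorem integrable_p (hμ : μ ∈ D.M) : Integrable (D.p μ) P := by
  simpa using D.F_finite _ (D.F_const 0) μ hμ

theorem measure_ne_zero (hμ : μ ∈ D.M) : P ≠ 0 := by
  rintro rfl
  simpa using D.p_prob μ hμ

theorem integral_pos_of_pos {f : Ω → ℝ} (hμ : μ ∈ D.M) (hf : Integrable f P)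
    (h0 : ∀ ω, 0 < f ω) : 0 < ∫ ω, f ω ∂P := by
  rw [integral_pos_iff_support_of_nonneg (fun ω => (h0 ω).le) hf]
  have : Function.support f = univ := by
    ext ω
    simpa using (h0 ω).ne'
  rw [this]
  exact Measure.measure_univ_pos.2 (measure_ne_zero hμ)

theorem mgf_pos (hφ : φ ∈ D.F) (hμ : μ ∈ D.M) : 0 < ∫ ω, exp (φ ω) * D.p μ ω ∂P :=
  integral_pos_of_pos hμ (D.F_finite φ hφ μ hμ) fun ω => mul_pos (exp_pos _) (D.p_pos μ hμ ω)

theorem exp_logMgf (hφ : φ ∈ D.F) (hμ : μ ∈ D.M) :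
    exp (D.logMgf φ μ) = ∫ ω, exp (φ ω) * D.p μ ω ∂P :=
  exp_log (mgf_pos hφ hμ)

theorem integral_exp_sub_logMgf (hφ : φ ∈ D.F) (hμ : μ ∈ D.M) :
    ∫ ω, exp (φ ω - D.logMgf φ μ) * D.p μ ω ∂P = 1 := by
  have : ∀ ω, exp (φ ω - D.logMgf φ μ) * D.p μ ω
      = exp (-D.logMgf φ μ) * (exp (φ ω) * D.p μ ω) := fun ω => by
    rw [sub_eq_add_neg, exp_add]; ring
  simp_rw [this]
  rw [integral_const_mul, ← exp_logMgf hφ hμ, ← exp_add, neg_add_cancel, exp_zero]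

theorem integrable_exp_sub (hφ : φ ∈ D.F) (hμ : μ ∈ D.M) (c : ℝ) :
    Integrable (fun ω => exp (φ ω - c) * D.p μ ω) P :=
  D.F_finite _ (D.F.sub_mem hφ (D.F_const c)) μ hμ

theorem logMgf_convex (hφ : φ ∈ D.F) (hψ : ψ ∈ D.F) (hμ : μ ∈ D.M) {a b : ℝ} (ha : 0 ≤ a)
    (hb : 0 ≤ b) (hab : a + b = 1) :
    D.logMgf (a • φ + b • ψ) μ ≤ a * D.logMgf φ μ + b * D.logMgf ψ μ := by
  set u := D.logMgf φ μ with hu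
  set v := D.logMgf ψ μ with hv
  have hmem : a • φ + b • ψ ∈ D.F := D.F.add_mem (D.F.smul_mem a hφ) (D.F.smul_mem b hψ)
  have h₁ : ∫ ω, exp ((a • φ + b • ψ) ω - (a * u + b * v)) * D.p μ ω ∂P ≤ 1 := by
    calc _ ≤ ∫ ω, (a * (exp (φ ω - u) * D.p μ ω) + b * (exp (ψ ω - v) * D.p μ ω)) ∂P := by
          refine integral_mono (integrable_exp_sub hmem hμ _)
            (((integrable_exp_sub hφ hμ _).const_mul _).add
              ((integrable_exp_sub hψ hμ _).const_mul _)) fun ω => ?_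
          have h₂ := convexOn_exp.2 (mem_univ (φ ω - u)) (mem_univ (ψ ω - v)) ha hb hab
          simp only [smul_eq_mul] at h₂
          have h₃ := mul_le_mul_of_nonneg_right h₂ (D.p_pos μ hμ ω).le
          have h₄ : (a • φ + b • ψ) ω - (a * u + b * v) = a * (φ ω - u) + b * (ψ ω - v) := by
            simp only [Pi.add_apply, Pi.smul_apply, smul_eq_mul]; ring
          simp only [h₄]
          linarith
      _ = 1 := by
          rw [integral_add ((integrable_exp_sub hφ hμ _).const_mul _)
              ((integrable_exp_sub hψ hμ _).const_mul _), integral_const_mul, integral_const_mul,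
            integral_exp_sub_logMgf hφ hμ, integral_exp_sub_logMgf hψ hμ]
          linarith
  have h₂ : ∀ ω, exp ((a • φ + b • ψ) ω - (a * u + b * v)) * D.p μ ω
      = exp (-(a * u + b * v)) * (exp ((a • φ + b • ψ) ω) * D.p μ ω) := fun ω => by
    rw [sub_eq_add_neg, exp_add]; ring
  simp_rw [h₂] at h₁
  rw [integral_const_mul, ← exp_logMgf hmem hμ, ← exp_add, exp_le_one_iff] at h₁
  linarith

theorem mul_logMgf_inv_smul_convex (hφ : φ ∈ D.F) (hψ : ψ ∈ D.F) (hμ : μ ∈ D.M) {a b α β : ℝ}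
    (ha : 0 ≤ a) (hb : 0 ≤ b) (hab : a + b = 1) (hα : 0 < α) (hβ : 0 < β) :
    (a * α + b * β) * D.logMgf ((a * α + b * β)⁻¹ • (a • φ + b • ψ)) μ
      ≤ a * (α * D.logMgf (α⁻¹ • φ) μ) + b * (β * D.logMgf (β⁻¹ • ψ) μ) := by
  set γ := a * α + b * β with hγ
  have hγ0 : 0 < γ := by
    simpa using (convex_Ioi (0 : ℝ)) (mem_Ioi.2 hα) (mem_Ioi.2 hβ) ha hb hab
  have h := logMgf_convex (D.F.smul_mem α⁻¹ hφ) (D.F.smul_mem β⁻¹ hψ) hμ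
    (a := a * α / γ) (b := b * β / γ) (by positivity) (by positivity)
    (by rw [← add_div, ← hγ, div_self hγ0.ne'])
  have he : (a * α / γ) • α⁻¹ • φ + (b * β / γ) • β⁻¹ • ψ = γ⁻¹ • (a • φ + b • ψ) := by
    rw [smul_add, smul_smul, smul_smul, smul_smul, smul_smul]
    congr 2 <;> field_simp
  rw [he] at h
  calc _ ≤ γ * _ := mul_le_mul_of_nonneg_left h hγ0.le
    _ = _ := by field_simp

theorem integrable_sqrt_mul (hμ : μ ∈ D.M) (hν : ν ∈ D.M) :
    Integrable (fun ω => √(D.p μ ω * D.p ν ω)) P :=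
  (integral_sqrt_mul_le (integrable_p hμ) (integrable_p hν) (fun ω => (D.p_pos μ hμ ω).le)
    fun ω => (D.p_pos ν hν ω).le).1

theorem affinity_pos (hμ : μ ∈ D.M) (hν : ν ∈ D.M) : 0 < D.affinity μ ν :=
  integral_pos_of_pos hμ (integrable_sqrt_mul hμ hν) fun ω =>
    sqrt_pos.2 (mul_pos (D.p_pos μ hμ ω) (D.p_pos ν hν ω))

theorem affinity_self (hμ : μ ∈ D.M) : D.affinity μ μ = 1 := by
  simp only [affinity, sqrt_mul_self (D.p_pos μ hμ _).le]
  exact D.p_prob μ hμ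

theorem two_mul_log_affinity_le (hφ : φ ∈ D.F) (hμ : μ ∈ D.M) (hν : ν ∈ D.M) :
    2 * log (D.affinity μ ν) ≤ D.logMgf φ μ + D.logMgf (-φ) ν := by
  have hφ' : -φ ∈ D.F := D.F.neg_mem hφ
  have h := (integral_sqrt_mul_le (D.F_finite φ hφ μ hμ) (D.F_finite _ hφ' ν hν)
    (fun ω => (mul_pos (exp_pos _) (D.p_pos μ hμ ω)).le)
    fun ω => (mul_pos (exp_pos _) (D.p_pos ν hν ω)).le).2
  have he : ∀ ω, exp (φ ω) * D.p μ ω * (exp ((-φ) ω) * D.p ν ω) = D.p μ ω * D.p ν ω := fun ω => by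
    have : exp (φ ω) * exp ((-φ) ω) = 1 := by rw [← exp_add]; simp
    linear_combination D.p μ ω * D.p ν ω * this
  simp_rw [he] at h
  have h₁ := log_le_log (affinity_pos hμ hν) h
  rw [log_mul (sqrt_pos.2 (mgf_pos hφ hμ)).ne' (sqrt_pos.2 (mgf_pos hφ' hν)).ne',
    log_sqrt (mgf_pos hφ hμ).le, log_sqrt (mgf_pos hφ' hν).le] at h₁
  simp only [logMgf]
  linarith

/-- The infimum in the variational formula for the affinity is attained. -/
theorem exists_logMgf_add_eq (hμ : μ ∈ D.M) (hν : ν ∈ D.M) :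
    ∃ φ ∈ D.F, D.logMgf φ μ + D.logMgf (-φ) ν = 2 * log (D.affinity μ ν) := by
  refine ⟨(1 / 2 : ℝ) • fun ω => log (D.p ν ω / D.p μ ω),
    D.F.smul_mem _ (D.logratio_mem ν hν μ hμ), ?_⟩
  have hsqrt : ∀ ω, √(D.p μ ω * D.p ν ω)
      = exp ((1 / 2) * (log (D.p μ ω) + log (D.p ν ω))) := fun ω => by
    have hm := D.p_pos μ hμ ω
    have hn := D.p_pos ν hν ω
    rw [← log_mul hm.ne' hn.ne', one_div_mul_eq_div, ← log_sqrt (mul_pos hm hn).le,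
      exp_log (sqrt_pos.2 (mul_pos hm hn))]
  have h₁ : ∀ ω, exp (((1 / 2 : ℝ) • fun ω => log (D.p ν ω / D.p μ ω)) ω) * D.p μ ω
      = √(D.p μ ω * D.p ν ω) := fun ω => by
    have hm := D.p_pos μ hμ ω
    have hn := D.p_pos ν hν ω
    conv_lhs => rw [← exp_log hm]
    rw [hsqrt, ← exp_add]
    simp only [Pi.smul_apply, smul_eq_mul, log_div hn.ne' hm.ne']
    congr 1; ring
  have h₂ : ∀ ω, exp ((-((1 / 2 : ℝ) • fun ω => log (D.p ν ω / D.p μ ω))) ω) * D.p ν ω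
      = √(D.p μ ω * D.p ν ω) := fun ω => by
    have hm := D.p_pos μ hμ ω
    have hn := D.p_pos ν hν ω
    conv_lhs => rw [← exp_log hn]
    rw [hsqrt, ← exp_add]
    simp only [Pi.neg_apply, Pi.smul_apply, smul_eq_mul, log_div hn.ne' hm.ne']
    congr 1; ring
  simp only [logMgf, h₁, h₂, affinity]
  ring

/-- The logarithm of the Hellinger affinity is jointly concave. -/
theorem log_affinity_concave {μ' ν' : E} (hμ : μ ∈ D.M) (hν : ν ∈ D.M) (hμ' : μ' ∈ D.M)
    (hν' : ν' ∈ D.M) {a b : ℝ} (ha : 0 ≤ a) (hb : 0 ≤ b) (hab : a + b = 1) :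
    a * log (D.affinity μ ν) + b * log (D.affinity μ' ν')
      ≤ log (D.affinity (a • μ + b • μ') (a • ν + b • ν')) := by
  obtain ⟨φ, hφ, he⟩ := exists_logMgf_add_eq (D.M_convex hμ hμ' ha hb hab)
    (D.M_convex hν hν' ha hb hab)
  have h₁ := (D.F_concave φ hφ).2 hμ hμ' ha hb hab
  have h₂ := (D.F_concave (-φ) (D.F.neg_mem hφ)).2 hν hν' ha hb hab
  have h₃ := mul_le_mul_of_nonneg_left (two_mul_log_affinity_le hφ hμ hν) ha
  have h₄ := mul_le_mul_of_nonneg_left (two_mul_log_affinity_le hφ hμ' hν') hb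
  simp only [smul_eq_mul] at h₁ h₂
  simp only [logMgf] at he h₃ h₄
  linarith

theorem continuousOn_affinity [FiniteDimensional ℝ E] (hν : ν ∈ D.M) :
    ContinuousOn (fun μ => D.affinity μ ν) D.M := by
  have hc : ConcaveOn ℝ D.M fun μ => log (D.affinity μ ν) := by
    refine ⟨D.M_convex, fun μ hμ μ' hμ' a b ha hb hab => ?_⟩
    have := log_affinity_concave hμ hν hμ' hν ha hb hab
    rwa [← add_smul, hab, one_smul] at this
  refine (hc.continuousOn D.M_open).rexp.congr fun μ hμ => ?_
  exact (exp_log (affinity_pos hμ hν)).symm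

theorem isProbabilityMeasure_obsMeasure (hμ : μ ∈ D.M) :
    IsProbabilityMeasure (obsMeasure D μ) := by
  constructor
  rw [obsMeasure, withDensity_apply _ .univ, Measure.restrict_univ,
    ← ofReal_integral_eq_lintegral_ofReal (integrable_p hμ)
      (.of_forall fun ω => (D.p_pos μ hμ ω).le), D.p_prob μ hμ, ENNReal.ofReal_one]

theorem obsMeasure_real (hμ : μ ∈ D.M) {B : Set Ω} (hB : MeasurableSet B) :
    (obsMeasure D μ).real B = ∫ ω in B, D.p μ ω ∂P := by
  rw [Measure.real, obsMeasure, withDensity_apply _ hB,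
    ← ofReal_integral_eq_lintegral_ofReal (integrable_p hμ).integrableOn
      (.of_forall fun ω => (D.p_pos μ hμ ω).le),
    ENNReal.toReal_ofReal (integral_nonneg fun ω => (D.p_pos μ hμ ω).le)]

/-- The affinity bounds from below the error probabilities of a test. -/
theorem affinity_le (hμ : μ ∈ D.M) (hν : ν ∈ D.M) {B : Set Ω} (hB : MeasurableSet B) :
    D.affinity μ ν ≤ √((obsMeasure D μ).real B) + √((obsMeasure D ν).real Bᶜ) ∧
    D.affinity μ ν ≤ √((obsMeasure D ν).real B) + √(1 - (obsMeasure D μ).real B) := by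
  have := isProbabilityMeasure_obsMeasure hμ
  have := isProbabilityMeasure_obsMeasure hν
  have key : ∀ C : Set Ω, MeasurableSet C → ∫ ω in C, √(D.p μ ω * D.p ν ω) ∂P
      ≤ √((obsMeasure D μ).real C) * √((obsMeasure D ν).real C) := fun C hC => by
    rw [obsMeasure_real hμ hC, obsMeasure_real hν hC]
    exact (integral_sqrt_mul_le (integrable_p hμ).integrableOn (integrable_p hν).integrableOn
      (fun ω => (D.p_pos μ hμ ω).le) fun ω => (D.p_pos ν hν ω).le).2
  have hle : ∀ (Q : Measure Ω) [IsProbabilityMeasure Q] (C : Set Ω), √(Q.real C) ≤ 1 :=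
    fun Q _ C => sqrt_le_one.2 measureReal_le_one
  have hsplit : D.affinity μ ν ≤ √((obsMeasure D μ).real B) * √((obsMeasure D ν).real B)
      + √((obsMeasure D μ).real Bᶜ) * √((obsMeasure D ν).real Bᶜ) := by
    rw [affinity, ← integral_add_compl hB (integrable_sqrt_mul hμ hν)]
    exact add_le_add (key B hB) (key _ hB.compl)
  constructor
  · refine hsplit.trans (add_le_add ?_ ?_)
    · exact mul_le_of_le_one_right (sqrt_nonneg _) (hle _ _)
    · exact mul_le_of_le_one_left (sqrt_nonneg _) (hle _ _)
  · rw [← probReal_compl_eq_one_sub hB]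
    refine hsplit.trans (add_le_add ?_ ?_)
    · exact mul_le_of_le_one_left (sqrt_nonneg _) (hle _ _)
    · exact mul_le_of_le_one_right (sqrt_nonneg _) (hle _ _)

/-- The **Chernoff bound**. -/
theorem obsMeasure_real_lt_le (hφ : φ ∈ D.F) (hμ : μ ∈ D.M) (s : ℝ) :
    (obsMeasure D μ).real {ω | s < φ ω} ≤ exp (D.logMgf φ μ - s) := by
  have hB : MeasurableSet {ω | s < φ ω} := measurableSet_lt measurable_const (D.F_meas φ hφ)
  have hI := integrable_exp_sub hφ hμ s
  rw [obsMeasure_real hμ hB]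
  calc ∫ ω in {ω | s < φ ω}, D.p μ ω ∂P
      ≤ ∫ ω in {ω | s < φ ω}, exp (φ ω - s) * D.p μ ω ∂P := by
        refine setIntegral_mono_on (integrable_p hμ).integrableOn hI.integrableOn hB
          fun ω hω => ?_
        exact le_mul_of_one_le_left (D.p_pos μ hμ ω).le (one_le_exp (sub_nonneg.2 (le_of_lt hω)))
    _ ≤ ∫ ω, exp (φ ω - s) * D.p μ ω ∂P :=
        setIntegral_le_integral hI
          (.of_forall fun ω => (mul_pos (exp_pos _) (D.p_pos μ hμ ω)).le)
    _ = exp (D.logMgf φ μ - s) := by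
        rw [sub_eq_add_neg, exp_add, exp_logMgf hφ hμ, ← integral_mul_const]
        refine integral_congr_ae (.of_forall fun ω => ?_)
        simp only [sub_eq_add_neg, exp_add]
        ring

theorem obsMeasure_real_lt_abs_le (hφ : φ ∈ D.F) (hμ : μ ∈ D.M) {α : ℝ} (hα : 0 < α)
    (δ k : ℝ) :
    (obsMeasure D μ).real {ω | δ < |φ ω + k|} ≤
      exp (D.logMgf (α⁻¹ • φ) μ - α⁻¹ * (δ - k))
        + exp (D.logMgf (-(α⁻¹ • φ)) μ - α⁻¹ * (δ + k)) := by
  have hψ : α⁻¹ • φ ∈ D.F := D.F.smul_mem _ hφ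
  have := isProbabilityMeasure_obsMeasure hμ
  calc (obsMeasure D μ).real {ω | δ < |φ ω + k|}
      ≤ (obsMeasure D μ).real ({ω | α⁻¹ * (δ - k) < (α⁻¹ • φ) ω}
          ∪ {ω | α⁻¹ * (δ + k) < (-(α⁻¹ • φ)) ω}) := by
        refine measureReal_mono fun ω hω => ?_
        have hω' : δ < |φ ω + k| := hω
        rcases lt_abs.1 hω' with h | h
        · refine Or.inl ?_
          change α⁻¹ * (δ - k) < α⁻¹ * φ ω
          exact mul_lt_mul_of_pos_left (by linarith) (inv_pos.2 hα)
        · refine Or.inr ?_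
          change α⁻¹ * (δ + k) < -(α⁻¹ * φ ω)
          rw [← mul_neg]
          exact mul_lt_mul_of_pos_left (by linarith) (inv_pos.2 hα)
    _ ≤ _ := measureReal_union_le _ _
    _ ≤ _ := add_le_add (obsMeasure_real_lt_le hψ hμ _)
        (obsMeasure_real_lt_le (D.F.neg_mem hψ) hμ _)

theorem exists_forall_tail_le [FiniteDimensional ℝ E] {K : Set E} (hK : IsCompact K)
    (hKM : K ⊆ D.M) {ghat : Ω → ℝ} (hghat : Measurable ghat) {e : ℝ} (he : 0 < e) :
    ∃ k : ℕ, ∀ μ ∈ K, (obsMeasure D μ).real {ω | (k : ℝ) < |ghat ω|} ≤ e := by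
  let B : ℕ → Set Ω := fun k => {ω | (k : ℝ) < |ghat ω|}
  have hB : ∀ k, MeasurableSet (B k) := fun k =>
    measurableSet_lt measurable_const (measurable_abs.comp hghat)
  have hanti : Antitone B := fun i j hij ω hω => by
    have hω' : (j : ℝ) < |ghat ω| := hω
    exact lt_of_le_of_lt (Nat.cast_le.2 hij : (i : ℝ) ≤ j) hω'
  have hmono : ∀ μ ∈ D.M, ∀ i j : ℕ, i ≤ j →
      (obsMeasure D μ).real (B j) ≤ (obsMeasure D μ).real (B i) := fun μ hμ i j hij => by
    have := isProbabilityMeasure_obsMeasure hμ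
    exact measureReal_mono (hanti hij)
  suffices h : ∃ k : ℕ, ∀ μ ∈ K, μ ∈ D.M → (obsMeasure D μ).real (B k) ≤ e by
    obtain ⟨k, hk⟩ := h
    exact ⟨k, fun μ hμ => hk μ hμ (hKM hμ)⟩
  refine hK.induction_on (p := fun S => ∃ k : ℕ, ∀ μ ∈ S, μ ∈ D.M →
    (obsMeasure D μ).real (B k) ≤ e) ⟨0, by simp⟩ ?_ ?_ ?_
  · rintro S T hST ⟨k, hk⟩
    exact ⟨k, fun μ hμ => hk μ (hST hμ)⟩
  · rintro S T ⟨k, hk⟩ ⟨l, hl⟩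
    refine ⟨max k l, fun μ hμ hM => ?_⟩
    rcases hμ with hμ | hμ
    · exact (hmono μ hM _ _ (le_max_left k l)).trans (hk μ hμ hM)
    · exact (hmono μ hM _ _ (le_max_right k l)).trans (hl μ hμ hM)
  · intro ν hνK
    have hν := hKM hνK
    have := isProbabilityMeasure_obsMeasure hν
    have hlt : √(1 - e) < 1 := by
      rw [sqrt_lt' one_pos]
      linarith
    set η := (1 - √(1 - e)) / 2 with hη
    have hη0 : 0 < η := by rw [hη]; linarith
    have hinter : ⋂ k, B k = ∅ := by
      refine eq_empty_of_forall_notMem fun ω hω => ?_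
      obtain ⟨k, hk⟩ := exists_nat_gt |ghat ω|
      exact lt_asymm hk (mem_iInter.1 hω k)
    have htend : Filter.Tendsto (fun k => √((obsMeasure D ν).real (B k))) Filter.atTop
        (nhds 0) := by
      have h₁ := tendsto_measure_iInter_atTop (μ := obsMeasure D ν)
        (fun k => (hB k).nullMeasurableSet) hanti ⟨0, measure_ne_top _ _⟩
      rw [hinter, measure_empty] at h₁
      have h₂ := ((ENNReal.tendsto_toReal ENNReal.zero_ne_top).comp h₁).sqrt
      simpa [Measure.real] using h₂
    obtain ⟨k, hk⟩ := (htend.eventually_lt_const hη0).exists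
    refine ⟨{μ | 1 - η < D.affinity μ ν}, ?_, k, fun μ hμ hM => ?_⟩
    · refine mem_nhdsWithin_of_mem_nhds ?_
      refine ((continuousOn_affinity hν).continuousAt
        (D.M_open.mem_nhds hν)).eventually_const_lt ?_
      simp only [affinity_self hν]
      linarith
    · by_contra! hlt'
      have h₁ := (affinity_le hM hν (hB k)).2
      have h₂ : √(1 - (obsMeasure D μ).real (B k)) ≤ √(1 - e) := sqrt_le_sqrt (by linarith)
      have h₃ : 1 - η < D.affinity μ ν := hμ
      linarith

end GoodPair

section RiskBounds

variable {D : GoodPair Ω P E} {A : (Fin n → ℝ) →ᵃ[ℝ] E} {g : Fin n → ℝ} {X : Set (Fin n → ℝ)}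
  {ghat : Ω → ℝ} {ε : ℝ}

theorem nonempty_setOf_iSup_lt [FiniteDimensional ℝ E] (hX : IsCompact X)
    (hA : ∀ x ∈ X, A x ∈ D.M) (hghat : Measurable ghat) (hε : 0 < ε) :
    {δ : ℝ | (⨆ x ∈ X, obsMeasure D (A x) {ω | δ < |ghat ω - g ⬝ᵥ x|})
      < ENNReal.ofReal ε}.Nonempty := by
  have hAc : Continuous A := A.continuous_of_finiteDimensional
  obtain ⟨k, hk⟩ := GoodPair.exists_forall_tail_le (hX.image hAc)
    (image_subset_iff.2 hA) hghat (half_pos hε)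
  have hgc : Continuous fun x : Fin n → ℝ => g ⬝ᵥ x := by
    simp only [dotProduct]
    fun_prop
  obtain ⟨C, hC⟩ := hX.exists_bound_of_continuousOn hgc.continuousOn
  refine ⟨k + C, ?_⟩
  have hlt : ENNReal.ofReal (ε / 2) < ENNReal.ofReal ε :=
    (ENNReal.ofReal_lt_ofReal_iff hε).2 (half_lt_self hε)
  refine lt_of_le_of_lt (iSup₂_le fun x hx => ?_) hlt
  have := GoodPair.isProbabilityMeasure_obsMeasure (hA x hx)
  calc obsMeasure D (A x) {ω | k + C < |ghat ω - g ⬝ᵥ x|}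
      ≤ obsMeasure D (A x) {ω | (k : ℝ) < |ghat ω|} := by
        refine measure_mono fun ω hω => ?_
        have h₁ : k + C < |ghat ω - g ⬝ᵥ x| := hω
        have h₂ : |g ⬝ᵥ x| ≤ C := hC x hx
        have h₃ := abs_sub (ghat ω) (g ⬝ᵥ x)
        change (k : ℝ) < |ghat ω|
        linarith
    _ ≤ ENNReal.ofReal (ε / 2) := by
        rw [← ofReal_measureReal]
        exact ENNReal.ofReal_le_ofReal (hk _ (mem_image_of_mem A hx))

theorem nonneg_of_iSup_lt (hXne : X.Nonempty) (hA : ∀ x ∈ X, A x ∈ D.M) (hε : ε < 1) {δ : ℝ}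
    (hδ : (⨆ x ∈ X, obsMeasure D (A x) {ω | δ < |ghat ω - g ⬝ᵥ x|}) < ENNReal.ofReal ε) :
    0 ≤ δ := by
  by_contra! hneg
  obtain ⟨x, hx⟩ := hXne
  have := GoodPair.isProbabilityMeasure_obsMeasure (hA x hx)
  have h₁ := lt_of_le_of_lt
    (le_iSup₂ (f := fun x _ => obsMeasure D (A x) {ω | δ < |ghat ω - g ⬝ᵥ x|}) x hx) hδ
  have h₂ : {ω | δ < |ghat ω - g ⬝ᵥ x|} = univ :=
    eq_univ_of_forall fun ω => hneg.trans_le (abs_nonneg _)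
  rw [h₂, measure_univ] at h₁
  have h₃ : ENNReal.ofReal ε ≤ 1 := ENNReal.ofReal_le_one.2 hε.le
  exact (h₁.trans_le h₃).false

theorem risk_nonneg (hXne : X.Nonempty) (hA : ∀ x ∈ X, A x ∈ D.M) (hε : ε < 1) :
    0 ≤ Risk D A g X ghat ε :=
  Real.sInf_nonneg fun _ hδ => nonneg_of_iSup_lt hXne hA hε hδ

/-- Two signals whose observations are hard to distinguish bound the risk from below. -/
theorem le_risk_of_le_affinity [FiniteDimensional ℝ E] (hX : IsCompact X)
    (hA : ∀ x ∈ X, A x ∈ D.M) (hghat : Measurable ghat) (hε : 0 < ε) {x y : Fin n → ℝ}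
    (hx : x ∈ X) (hy : y ∈ X) (hxy : 2 * √ε ≤ D.affinity (A x) (A y)) :
    (g ⬝ᵥ x - g ⬝ᵥ y) / 2 ≤ Risk D A g X ghat ε := by
  refine le_csInf (nonempty_setOf_iSup_lt hX hA hghat hε) fun δ hδ => ?_
  by_contra! hlt
  have hprob : ∀ z ∈ X, (obsMeasure D (A z)).real {ω | δ < |ghat ω - g ⬝ᵥ z|} < ε := by
    intro z hz
    have := GoodPair.isProbabilityMeasure_obsMeasure (hA z hz)
    have h₁ := lt_of_le_of_lt
      (le_iSup₂ (f := fun x _ => obsMeasure D (A x) {ω | δ < |ghat ω - g ⬝ᵥ x|}) z hz) hδ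
    rw [← ofReal_measureReal] at h₁
    exact (ENNReal.ofReal_lt_ofReal_iff hε).1 h₁
  have hB : MeasurableSet {ω | δ < |ghat ω - g ⬝ᵥ x|} :=
    measurableSet_lt measurable_const (measurable_abs.comp (hghat.sub_const _))
  have := GoodPair.isProbabilityMeasure_obsMeasure (hA y hy)
  have hcompl : (obsMeasure D (A y)).real {ω | δ < |ghat ω - g ⬝ᵥ x|}ᶜ < ε := by
    refine lt_of_le_of_lt (measureReal_mono fun ω hω => ?_) (hprob y hy)
    have h₁ : |ghat ω - g ⬝ᵥ x| ≤ δ := not_lt.1 hω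
    change δ < |ghat ω - g ⬝ᵥ y|
    have h₂ := (abs_le.1 h₁).1
    have h₃ := le_abs_self (ghat ω - g ⬝ᵥ y)
    linarith
  have h₁ := (GoodPair.affinity_le (hA x hx) (hA y hy) hB).1
  have h₂ := sqrt_lt_sqrt measureReal_nonneg (hprob x hx)
  have h₃ := sqrt_lt_sqrt measureReal_nonneg hcompl
  linarith

theorem riskAff_le (hXne : X.Nonempty) (hA : ∀ x ∈ X, A x ∈ D.M) (hε : 0 < ε) (hε1 : ε < 1)
    {φ : Ω → ℝ} (hφ : φ ∈ D.F) {α c : ℝ} (hα : 0 < α)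
    (h : ∀ x ∈ X, ∀ y ∈ X, g ⬝ᵥ x - g ⬝ᵥ y + α * D.logMgf (α⁻¹ • φ) (A y)
      + α * D.logMgf (-(α⁻¹ • φ)) (A x) + 2 * α * log (2 / ε) ≤ c) :
    RiskAff D A g X ε ≤ c / 2 := by
  have hψ : α⁻¹ • φ ∈ D.F := D.F.smul_mem _ hφ
  obtain ⟨d, hd₁, hd₂⟩ : ∃ d, (∀ y ∈ X, -(g ⬝ᵥ y) + α * D.logMgf (α⁻¹ • φ) (A y)
      + α * log (2 / ε) ≤ d) ∧ ∀ x ∈ X, d ≤ c - (g ⬝ᵥ x + α * D.logMgf (-(α⁻¹ • φ)) (A x)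
      + α * log (2 / ε)) := by
    obtain ⟨x₀, hx₀⟩ := hXne
    set u : (Fin n → ℝ) → ℝ := fun y => -(g ⬝ᵥ y) + α * D.logMgf (α⁻¹ • φ) (A y)
      + α * log (2 / ε) with hu
    have hle : ∀ x ∈ X, ∀ y ∈ X, u y ≤ c - (g ⬝ᵥ x + α * D.logMgf (-(α⁻¹ • φ)) (A x)
        + α * log (2 / ε)) := fun x hx y hy => by
      have := h x hx y hy
      simp only [hu]
      linarith
    refine ⟨sSup (u '' X), fun y hy => ?_, fun x hx => ?_⟩
    · exact le_csSup ⟨_, forall_mem_image.2 (hle x₀ hx₀)⟩ (mem_image_of_mem u hy)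
    · exact csSup_le ⟨_, mem_image_of_mem u hx₀⟩ (forall_mem_image.2 (hle x hx))
  set k := c / 2 - d with hk
  have hφk : (φ + fun _ => k) ∈ D.F := D.F.add_mem hφ (D.F_const k)
  have hbdd : BddBelow {ρ : ℝ | ∃ φ ∈ D.F, ρ = Risk D A g X φ ε} := by
    refine ⟨0, ?_⟩
    rintro _ ⟨φ', -, rfl⟩
    exact risk_nonneg hXne hA hε1
  refine (csInf_le hbdd ⟨_, hφk, rfl⟩).trans (le_of_forall_gt_imp_ge_of_dense fun δ hδ => ?_)
  refine csInf_le ⟨0, fun _ hδ => nonneg_of_iSup_lt hXne hA hε1 hδ⟩ ?_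
  set q := exp (-(α⁻¹ * (δ - c / 2))) with hq
  have hq1 : q < 1 := exp_lt_one_iff.2 (neg_neg_of_pos (mul_pos (inv_pos.2 hα) (sub_pos.2 hδ)))
  have hlt : ENNReal.ofReal (ε * q) < ENNReal.ofReal ε :=
    (ENNReal.ofReal_lt_ofReal_iff hε).2 (mul_lt_of_lt_one_right hε hq1)
  have hεq : exp (-log (2 / ε) - α⁻¹ * (δ - c / 2)) = ε / 2 * q := by
    rw [sub_eq_add_neg, exp_add, Real.exp_neg, exp_log (by positivity), inv_div]
  refine lt_of_le_of_lt (iSup₂_le fun x hx => ?_) hlt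
  have := GoodPair.isProbabilityMeasure_obsMeasure (hA x hx)
  have hαα : α⁻¹ * α = 1 := inv_mul_cancel₀ hα.ne'
  have h₁ : exp (D.logMgf (α⁻¹ • φ) (A x) - α⁻¹ * (δ - (k - g ⬝ᵥ x))) ≤ ε / 2 * q := by
    rw [← hεq, exp_le_exp, hk]
    have := mul_le_mul_of_nonneg_left (hd₁ x hx) (inv_pos.2 hα).le
    linear_combination this + (-D.logMgf (α⁻¹ • φ) (A x) - log (2 / ε)) * hαα
  have h₂ : exp (D.logMgf (-(α⁻¹ • φ)) (A x) - α⁻¹ * (δ + (k - g ⬝ᵥ x))) ≤ ε / 2 * q := by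
    rw [← hεq, exp_le_exp, hk]
    have := mul_le_mul_of_nonneg_left (hd₂ x hx) (inv_pos.2 hα).le
    linear_combination this + (-D.logMgf (-(α⁻¹ • φ)) (A x) - log (2 / ε)) * hαα
  have h₃ := GoodPair.obsMeasure_real_lt_abs_le hφ (hA x hx) hα δ (k - g ⬝ᵥ x)
  rw [← ofReal_measureReal]
  refine ENNReal.ofReal_le_ofReal ?_
  simp only [Pi.add_apply, add_sub_assoc]
  linarith

/-- Every pair of signals with Hellinger affinity at least `ε / 2` bounds the minimax risk. -/
theorem le_mul_riskStar [FiniteDimensional ℝ E] (hX : IsCompact X) (hXcv : Convex ℝ X)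
    (hA : ∀ x ∈ X, A x ∈ D.M) (hε : 0 < ε) (hε1 : ε < 1 / 4) {x y : Fin n → ℝ} (hx : x ∈ X)
    (hy : y ∈ X) (hxy : -log (2 / ε) ≤ log (D.affinity (A x) (A y))) :
    (g ⬝ᵥ x - g ⬝ᵥ y) / 2 ≤
      (2 * log (2 / ε) / log (1 / (4 * ε))) * RiskStar D A g X ε := by
  have hs : 0 < log (1 / (4 * ε)) := log_pos (by rw [lt_div_iff₀ (by positivity)]; linarith)
  have hsr : log (1 / (4 * ε)) ≤ 2 * log (2 / ε) := by
    have h₁ : log (1 / (4 * ε)) ≤ log (2 / ε) := by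
      refine log_le_log (by positivity) ?_
      rw [div_le_div_iff₀ (by positivity) hε]
      linarith
    linarith
  have hr : 0 < log (2 / ε) := by linarith
  set t := log (1 / (4 * ε)) / (2 * log (2 / ε)) with ht
  have ht0 : 0 < t := by positivity
  have ht1 : t ≤ 1 := (div_le_one (by positivity)).2 hsr
  set z := (1 / 2 : ℝ) • x + (1 / 2 : ℝ) • y with hz
  have hzX : z ∈ X := hXcv hx hy (by norm_num) (by norm_num) (by norm_num)
  have h1t : 0 ≤ 1 - t := sub_nonneg.2 ht1
  have hsum : t + (1 - t) = 1 := add_sub_cancel _ _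
  have hx' := hXcv hx hzX ht0.le h1t hsum
  have hy' := hXcv hy hzX ht0.le h1t hsum
  have haff : 2 * √ε ≤ D.affinity (A (t • x + (1 - t) • z)) (A (t • y + (1 - t) • z)) := by
    have h₁ := GoodPair.log_affinity_concave (hA x hx) (hA y hy) (hA z hzX) (hA z hzX)
      ht0.le h1t hsum
    rw [GoodPair.affinity_self (hA z hzX), log_one, mul_zero, add_zero,
      ← Convex.combo_affine_apply hsum, ← Convex.combo_affine_apply hsum] at h₁
    rw [← log_le_log_iff (by positivity) (GoodPair.affinity_pos (hA _ hx') (hA _ hy'))]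
    refine le_trans ?_ h₁
    refine le_trans (le_of_eq ?_) (mul_le_mul_of_nonneg_left hxy ht0.le)
    have h₂ : log (1 / (4 * ε)) = -(2 * log 2 + log ε) := by
      rw [one_div, log_inv, log_mul (by norm_num) hε.ne',
        show (4 : ℝ) = 2 ^ 2 by norm_num, log_pow]
      norm_num
    have h₃ : t * -log (2 / ε) = -(log (1 / (4 * ε)) / 2) := by
      rw [ht]; field_simp
    rw [h₃, h₂, log_mul (by norm_num) (sqrt_pos.2 hε).ne', log_sqrt hε.le]
    ring
  have hlow : t * ((g ⬝ᵥ x - g ⬝ᵥ y) / 2) ≤ RiskStar D A g X ε := by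
    refine le_csInf ⟨_, 0, measurable_const, rfl⟩ ?_
    rintro _ ⟨ghat, hghat, rfl⟩
    refine le_trans (le_of_eq ?_) (le_risk_of_le_affinity hX hA hghat hε hx' hy' haff)
    simp only [dotProduct_add, dotProduct_smul, smul_eq_mul]
    ring
  have ht' : 2 * log (2 / ε) / log (1 / (4 * ε)) = t⁻¹ := by rw [ht, inv_div]
  rw [ht', ← div_eq_inv_mul, le_div_iff₀ ht0]
  linarith

theorem exists_forall_bound [FiniteDimensional ℝ E] (hXne : X.Nonempty) (hX : IsCompact X)
    (hXcv : Convex ℝ X) (hA : ∀ x ∈ X, A x ∈ D.M) {r c : ℝ}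
    (h : ∀ x ∈ X, ∀ y ∈ X, -r ≤ log (D.affinity (A x) (A y)) → g ⬝ᵥ x - g ⬝ᵥ y < c) :
    ∃ φ ∈ D.F, ∃ α : ℝ, 0 < α ∧ ∀ x ∈ X, ∀ y ∈ X,
      g ⬝ᵥ x - g ⬝ᵥ y + α * D.logMgf (α⁻¹ • φ) (A y) + α * D.logMgf (-(α⁻¹ • φ)) (A x)
        + 2 * α * r ≤ c := by
  have hAc : Continuous A := A.continuous_of_finiteDimensional
  have hgc : Continuous fun x : Fin n → ℝ => g ⬝ᵥ x := by
    simp only [dotProduct]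
    fun_prop
  have hLc : ∀ ψ ∈ D.F, ContinuousOn (fun x => D.logMgf ψ (A x)) X := fun ψ hψ =>
    ((D.F_concave ψ hψ).continuousOn D.M_open).comp hAc.continuousOn hA
  have hL : ∀ ψ ∈ D.F, ∀ x ∈ X, ∀ y ∈ X, ∀ a b : ℝ, 0 ≤ a → 0 ≤ b → a + b = 1 →
      a * D.logMgf ψ (A x) + b * D.logMgf ψ (A y) ≤ D.logMgf ψ (A (a • x + b • y)) := by
    intro ψ hψ x hx y hy a b ha hb hab
    rw [Convex.combo_affine_apply hab]
    exact (D.F_concave ψ hψ).2 (hA x hx) (hA y hy) ha hb hab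
  let f : (Fin n → ℝ) × (Fin n → ℝ) → (Ω → ℝ) × ℝ → ℝ := fun z w =>
    g ⬝ᵥ z.1 - g ⬝ᵥ z.2 + w.2 * D.logMgf (w.2⁻¹ • w.1) (A z.2)
      + w.2 * D.logMgf (-(w.2⁻¹ • w.1)) (A z.1) + 2 * w.2 * r
  suffices hf : ∃ w ∈ (D.F : Set (Ω → ℝ)) ×ˢ Ioi (0 : ℝ), ∀ z ∈ X ×ˢ X, f z w ≤ c by
    obtain ⟨⟨φ, α⟩, ⟨hφ, hα⟩, hle⟩ := hf
    exact ⟨φ, hφ, α, hα, fun x hx y hy => hle (x, y) ⟨hx, hy⟩⟩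
  refine exists_forall_le_of_concaveOn_convexOn (hX.prod hX) (hXne.prod hXne) ?_ ?_ ?_ ?_
  · rintro ⟨φ, α⟩ ⟨hφ, hα⟩
    have hψ := D.F.smul_mem α⁻¹ hφ
    refine ⟨hXcv.prod hXcv, ?_⟩
    rintro ⟨x, y⟩ ⟨hx, hy⟩ ⟨x', y'⟩ ⟨hx', hy'⟩ a b ha hb hab
    have h₁ := mul_le_mul_of_nonneg_left (hL _ hψ y hy y' hy' a b ha hb hab) (le_of_lt hα)
    have h₂ := mul_le_mul_of_nonneg_left
      (hL _ (D.F.neg_mem hψ) x hx x' hx' a b ha hb hab) (le_of_lt hα)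
    simp only [f, Prod.smul_mk, Prod.mk_add_mk, dotProduct_add, dotProduct_smul, smul_eq_mul]
      at h₁ h₂ ⊢
    linear_combination h₁ + h₂ + 2 * α * r * hab
  · rintro ⟨φ, α⟩ ⟨hφ, hα⟩
    have hψ := D.F.smul_mem α⁻¹ hφ
    have h₁ : ContinuousOn (fun z : (Fin n → ℝ) × (Fin n → ℝ) =>
        D.logMgf (α⁻¹ • φ) (A z.2)) (X ×ˢ X) :=
      (hLc _ hψ).comp continuous_snd.continuousOn fun z hz => hz.2
    have h₂ : ContinuousOn (fun z : (Fin n → ℝ) × (Fin n → ℝ) =>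
        D.logMgf (-(α⁻¹ • φ)) (A z.1)) (X ×ˢ X) :=
      (hLc _ (D.F.neg_mem hψ)).comp continuous_fst.continuousOn fun z hz => hz.1
    have h₃ : ContinuousOn (fun z : (Fin n → ℝ) × (Fin n → ℝ) => g ⬝ᵥ z.1 - g ⬝ᵥ z.2) (X ×ˢ X) :=
      ((hgc.comp continuous_fst).sub (hgc.comp continuous_snd)).continuousOn
    exact ((h₃.add (continuousOn_const.mul h₁)).add (continuousOn_const.mul h₂)).add
      continuousOn_const
  · rintro ⟨x, y⟩ ⟨hx, hy⟩
    refine ⟨D.F.convex.prod (convex_Ioi 0), ?_⟩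
    rintro ⟨φ, α⟩ ⟨hφ, hα⟩ ⟨ψ, β⟩ ⟨hψ, hβ⟩ a b ha hb hab
    have h₁ := GoodPair.mul_logMgf_inv_smul_convex hφ hψ (hA y hy) ha hb hab hα hβ
    have h₂ := GoodPair.mul_logMgf_inv_smul_convex (D.F.neg_mem hφ) (D.F.neg_mem hψ) (hA x hx)
      ha hb hab hα hβ
    have he : a • -φ + b • -ψ = -(a • φ + b • ψ) := by rw [smul_neg, smul_neg, neg_add]
    rw [he] at h₂
    simp only [smul_neg] at h₂
    simp only [f, Prod.smul_mk, Prod.mk_add_mk, smul_eq_mul]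
    linear_combination h₁ + h₂ - (g ⬝ᵥ x - g ⬝ᵥ y) * hab
  · rintro ⟨x, y⟩ ⟨hx, hy⟩
    obtain ⟨φ, hφ, he⟩ := GoodPair.exists_logMgf_add_eq (hA y hy) (hA x hx)
    have hval : ∀ α : ℝ, 0 < α → f (x, y) (α • φ, α)
        = g ⬝ᵥ x - g ⬝ᵥ y + 2 * α * (log (D.affinity (A y) (A x)) + r) := fun α hα => by
      simp only [f, inv_smul_smul₀ hα.ne']
      linear_combination α * he
    have hcomm : D.affinity (A y) (A x) = D.affinity (A x) (A y) := by
      simp only [GoodPair.affinity, mul_comm]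
    rw [hcomm] at hval
    suffices hα : ∃ α : ℝ, 0 < α ∧
        g ⬝ᵥ x - g ⬝ᵥ y + 2 * α * (log (D.affinity (A x) (A y)) + r) < c by
      obtain ⟨α, hα, hlt⟩ := hα
      exact ⟨(α • φ, α), ⟨D.F.smul_mem α hφ, hα⟩, by rwa [hval α hα]⟩
    set H := log (D.affinity (A x) (A y)) + r with hH
    by_cases hH0 : 0 ≤ H
    · have hgap := h x hx y hy (by linarith)
      refine ⟨(c - (g ⬝ᵥ x - g ⬝ᵥ y)) / (4 * (H + 1)), by apply div_pos <;> linarith, ?_⟩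
      have h₁ : H / (H + 1) < 1 := (div_lt_one (by linarith)).2 (by linarith)
      have h₂ : 2 * ((c - (g ⬝ᵥ x - g ⬝ᵥ y)) / (4 * (H + 1))) * H
          = (c - (g ⬝ᵥ x - g ⬝ᵥ y)) / 2 * (H / (H + 1)) := by field_simp; ring
      rw [h₂]
      nlinarith
    · push Not at hH0
      refine ⟨(|g ⬝ᵥ x - g ⬝ᵥ y - c| + 1) / (2 * -H),
        div_pos (by positivity) (by linarith), ?_⟩
      have h₂ : 2 * ((|g ⬝ᵥ x - g ⬝ᵥ y - c| + 1) / (2 * -H)) * H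
          = -(|g ⬝ᵥ x - g ⬝ᵥ y - c| + 1) := by
        have := hH0.ne
        field_simp
      rw [h₂]
      linarith [le_abs_self (g ⬝ᵥ x - g ⬝ᵥ y - c)]

end RiskBounds

/-- **Theorem 3.1.** For a good pair `(𝒟, ℱ)`, a convex compact `X ⊆ ℝⁿ`, an affine
map `A` with `A(X) ⊆ M` and a linear form `g`, for every `0 ≤ ε < 1/4` the minimax
optimal `ε`-risk of affine estimates is within the factor
`θ(ε) = 2 ln(2/ε)/ln(1/(4ε))` of the minimax optimal `ε`-risk over all estimates. -/
theorem affine_estimates_near_optimal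
    {Ω : Type*} [MeasurableSpace Ω] [TopologicalSpace Ω] [PolishSpace Ω] [BorelSpace Ω]
    {P : Measure Ω} [SigmaFinite P] {m n : ℕ}
    (D : GoodPair Ω P (Fin m → ℝ))
    (X : Set (Fin n → ℝ)) (hXne : X.Nonempty) (hXcp : IsCompact X) (hXcv : Convex ℝ X)
    (A : (Fin n → ℝ) →ᵃ[ℝ] (Fin m → ℝ)) (hA : ∀ x ∈ X, A x ∈ D.M)
    (g : Fin n → ℝ) (ε : ℝ) (hε0 : 0 ≤ ε) (hε1 : ε < 1/4) :
    RiskAff D A g X ε ≤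
      (2 * Real.log (2 / ε) / Real.log (1 / (4 * ε))) * RiskStar D A g X ε := by
  rcases hε0.eq_or_lt with rfl | hε
  · have h : RiskAff D A g X 0 ≤ 0 := by
      refine Real.sInf_nonpos ?_
      rintro _ ⟨φ, -, rfl⟩
      simp [Risk]
    simpa using h
  · refine le_of_forall_pos_le_add fun η hη => ?_
    obtain ⟨φ, hφ, α, hα, h⟩ := exists_forall_bound (D := D) (A := A) (g := g)
      (r := Real.log (2 / ε)) (c := 2 * ((2 * Real.log (2 / ε) / Real.log (1 / (4 * ε)))
        * RiskStar D A g X ε + η)) hXne hXcp hXcv hA fun x hx y hy hxy => by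
          have := le_mul_riskStar (g := g) hXcp hXcv hA hε hε1 hx hy hxy
          linarith
    exact (riskAff_le hXne hA hε (by linarith) hφ hα h).trans (by linarith)
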